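/- One-dimensional late-time Duhamel estimate: fix 2 < r ≤ ∞. For any t > 0, any measurable interval I ⊆ [t/2, t], and any measurable u : I × ℝ → ℂ, one has ‖ ∫_I e^{i(t−s)Δ} (|u|⁴u)(s) ds ‖_{L^r_x(ℝ)} ≤ C t^{−(1/2−1/r)} ( sup_{s ∈ I} s^{1/2−1/r} ‖u(s)‖_{L^r_x(ℝ)} ) ‖u‖⁴_{L^{8r/(r+2),4}_s L^{4r/(r−2)}_x(I×ℝ)}, with C depending only on r. -/

import Mathlib

open MeasureTheory Set
open scoped ENNReal Real

noncomputable section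

/-- The free Schrödinger propagator `e^{itΔ}` acting on functions on a `d`-dimensional space:
for `t ≠ 0`, `(e^{itΔ}f)(x) = (4πit)^{-d/2} ∫ e^{i|x-y|²/(4t)} f(y) dy`, and `e^{i0Δ}f = f`. -/
def schrod {E : Type*} [NormedAddCommGroup E] [MeasureSpace E] (d : ℕ) (t : ℝ) (f : E → ℂ) :
    E → ℂ :=
  if t = 0 then f
  else fun x =>
    (4 * (Real.pi : ℂ) * Complex.I * (t : ℂ)) ^ (-(d : ℂ) / 2) *
      ∫ y, Complex.exp (Complex.I * ((‖x - y‖ ^ 2 : ℝ) : ℂ) / (4 * (t : ℂ))) * f y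

/-- Mixed Lebesgue norm `‖u‖_{L^p_t L^q_x (I × space)}`. -/
def mixedNorm {α : Type*} [MeasurableSpace α] (ν : Measure α) (I : Set ℝ) (p q : ℝ≥0∞)
    (u : ℝ → α → ℂ) : ℝ≥0∞ :=
  if p = ∞ then essSup (fun t => eLpNorm (u t) q ν) (volume.restrict I)
  else (∫⁻ t in I, eLpNorm (u t) q ν ^ p.toReal) ^ (1 / p.toReal)

/-- Lorentz quasinorm `p^{1/q} ‖ λ · ν({g > λ})^{1/p} ‖_{L^q((0,∞), dλ/λ)}`
for an `ℝ≥0∞`-valued function `g`. -/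
def lorentzNorm {α : Type*} [MeasurableSpace α] (ν : Measure α) (p q : ℝ≥0∞)
    (g : α → ℝ≥0∞) : ℝ≥0∞ :=
  if q = ∞ then
    ⨆ l ∈ Set.Ioi (0 : ℝ), ENNReal.ofReal l * ν {x | ENNReal.ofReal l < g x} ^ p⁻¹.toReal
  else
    (p * ∫⁻ l in Set.Ioi (0 : ℝ),
        (ENNReal.ofReal l * ν {x | ENNReal.ofReal l < g x} ^ p⁻¹.toReal) ^ q.toReal /
          ENNReal.ofReal l) ^ q⁻¹.toReal

/-- Lorentz quasinorm `‖f‖_{L^{p,q}}` of a scalar function. -/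
def lorentzNormC {α : Type*} [MeasurableSpace α] (ν : Measure α) (p q : ℝ≥0∞)
    (f : α → ℂ) : ℝ≥0∞ :=
  lorentzNorm ν p q fun x => (‖f x‖₊ : ℝ≥0∞)

/-- Lorentz-in-time mixed norm `‖u‖_{L^{p,q}_t L^r_x (I × space)}`. -/
def lorentzMixedNorm {α : Type*} [MeasurableSpace α] (ν : Measure α) (I : Set ℝ)
    (p q r : ℝ≥0∞) (u : ℝ → α → ℂ) : ℝ≥0∞ :=
  lorentzNorm (volume.restrict I) p q fun t => eLpNorm (u t) r ν

/-- The nonlinearity `|f|^a f`. -/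
def nonlin {E : Type*} (a : ℝ) (f : E → ℂ) : E → ℂ := fun x => ((‖f x‖ ^ a : ℝ) : ℂ) * f x

/-!
For `τ ≠ 0` the propagator `e^{iτΔ}` is, up to multiplication by chirps and a dilation, the Fourier
transform, so the Hausdorff–Young inequality gives the dispersive decay
`‖e^{iτΔ}f‖_r ≲ |τ|^{-a} ‖f‖_{r'}` with `a = d (1/2 - 1/r)`. Minkowski's inequality then reduces the
Duhamel term to `∫_I |t - s|^{-a} ‖|u|^p u(s)‖_{r'} ds`, and Hölder's inequality in space bounds the
integrand by `|t - s|^{-a} ‖u(s)‖_q^p ‖u(s)‖_r`. Since `s ≥ t/2`, the last factor is at most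
`(2/t)^a` times the weighted supremum. The weight `|t - ·|^{-a}` belongs to weak `L^{1/a}` but not
to `L^{1/a}`; pairing it with `‖u(s)‖_q^p ∈ L^{1/(1-a),1}` is what requires the Lorentz norm in
time.
-/

section LayerCake

lemma lintegral_Ioo_zero_ofReal_rpow {s : ℝ} (hs : -1 < s) {R : ℝ} (hR : 0 ≤ R) :
    ∫⁻ l in Ioo 0 R, ENNReal.ofReal (l ^ s) = ENNReal.ofReal (R ^ (s + 1) / (s + 1)) := by
  have hint : IntervalIntegrable (fun l : ℝ ↦ l ^ s) volume 0 R :=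
    intervalIntegral.intervalIntegrable_rpow' hs
  rw [restrict_Ioo_eq_restrict_Ioc, ← ofReal_integral_eq_lintegral_ofReal,
    ← intervalIntegral.integral_of_le hR, integral_rpow (.inl hs),
    Real.zero_rpow (by linarith), sub_zero]
  · exact (intervalIntegrable_iff_integrableOn_Ioc_of_le hR).1 hint
  · filter_upwards [ae_restrict_mem measurableSet_Ioc] with l hl
    exact Real.rpow_nonneg hl.1.le s

lemma lintegral_Ioi_zero_ofReal_rpow (s : ℝ) :
    ∫⁻ l in Ioi (0 : ℝ), ENNReal.ofReal (l ^ s) = ∞ := by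
  have hmeas : Measurable fun l : ℝ ↦ l ^ s := by fun_prop
  by_contra hfin
  refine not_integrableOn_Ioi_rpow s
    ((lintegral_ofReal_ne_top_iff_integrable hmeas.aestronglyMeasurable ?_).1 hfin)
  filter_upwards [ae_restrict_mem measurableSet_Ioi] with l hl
  exact Real.rpow_nonneg (le_of_lt hl) s

lemma lintegral_Ioi_indicator_lt_ofReal_rpow {s : ℝ} (hs : -1 < s) (c : ℝ≥0∞) :
    ∫⁻ l in Ioi (0 : ℝ), {l | ENNReal.ofReal l < c}.indicator (fun l ↦ ENNReal.ofReal (l ^ s)) l =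
      c ^ (s + 1) / ENNReal.ofReal (s + 1) := by
  have hs' : 0 < s + 1 := by linarith
  have hset : MeasurableSet {l : ℝ | ENNReal.ofReal l < c} :=
    measurableSet_lt (by fun_prop) measurable_const
  rw [lintegral_indicator hset, Measure.restrict_restrict hset]
  rcases eq_or_ne c ∞ with rfl | hc
  · simp [lintegral_Ioi_zero_ofReal_rpow, hs', ENNReal.top_div_of_ne_top]
  · have hIoo : {l : ℝ | ENNReal.ofReal l < c} ∩ Ioi 0 = Ioo 0 c.toReal := by
      ext l
      simp only [mem_inter_iff, mem_ofPred_eq, mem_Ioi, mem_Ioo, and_comm (a := 0 < l)]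
      exact and_congr_left fun hl ↦ ENNReal.ofReal_lt_iff_lt_toReal hl.le hc
    rw [hIoo, lintegral_Ioo_zero_ofReal_rpow hs ENNReal.toReal_nonneg,
      ENNReal.ofReal_div_of_pos hs', ← ENNReal.ofReal_rpow_of_nonneg ENNReal.toReal_nonneg hs'.le,
      ENNReal.ofReal_toReal hc]

variable {α : Type*} [MeasurableSpace α]

lemma lintegral_rpow_eq_lintegral_meas_ofReal_lt_mul (μ : Measure α) [SFinite μ]
    {g : α → ℝ≥0∞} (hg : Measurable g) {p : ℝ} (hp : 0 < p) :
    ∫⁻ x, g x ^ p ∂μ = ENNReal.ofReal p *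
      ∫⁻ l in Ioi (0 : ℝ), μ {x | ENNReal.ofReal l < g x} * ENNReal.ofReal (l ^ (p - 1)) := by
  have hpow (x : α) : g x ^ p = ENNReal.ofReal p * ∫⁻ l in Ioi (0 : ℝ),
      {l | ENNReal.ofReal l < g x}.indicator (fun l ↦ ENNReal.ofReal (l ^ (p - 1))) l := by
    rw [lintegral_Ioi_indicator_lt_ofReal_rpow (by linarith), sub_add_cancel,
      ENNReal.mul_div_cancel (by simpa using hp) ENNReal.ofReal_ne_top]
  have hmeas : Measurable fun z : α × ℝ ↦
      {l | ENNReal.ofReal l < g z.1}.indicator (fun l ↦ ENNReal.ofReal (l ^ (p - 1))) z.2 :=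
    Measurable.indicator (f := fun z : α × ℝ ↦ ENNReal.ofReal (z.2 ^ (p - 1)))
      (by fun_prop) (measurableSet_lt (by fun_prop) (by fun_prop) :
        MeasurableSet {z : α × ℝ | ENNReal.ofReal z.2 < g z.1})
  simp_rw [hpow]
  rw [lintegral_const_mul' _ _ ENNReal.ofReal_ne_top, lintegral_lintegral_swap hmeas.aemeasurable]
  congr 1
  refine lintegral_congr fun l ↦ ?_
  have hset : MeasurableSet {x | ENNReal.ofReal l < g x} := measurableSet_lt measurable_const hg
  rw [mul_comm, ← setLIntegral_const, ← lintegral_indicator hset]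
  rfl

lemma lorentzNorm_rpow {μ : Measure α} {P : ℝ≥0∞} {p : ℝ} (hp : 0 < p) (g : α → ℝ≥0∞) :
    lorentzNorm μ P (ENNReal.ofReal p) g ^ p = P * ∫⁻ l in Ioi (0 : ℝ),
      μ {x | ENNReal.ofReal l < g x} ^ (p / P.toReal) * ENNReal.ofReal (l ^ (p - 1)) := by
  rw [lorentzNorm, if_neg ENNReal.ofReal_ne_top, ← ENNReal.rpow_mul,
    ENNReal.toReal_inv (ENNReal.ofReal p), ENNReal.toReal_ofReal hp.le, inv_mul_cancel₀ hp.ne',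
    ENNReal.rpow_one]
  congr 1
  refine setLIntegral_congr_fun measurableSet_Ioi fun l (hl : 0 < l) ↦ ?_
  rw [ENNReal.mul_rpow_of_nonneg _ _ hp.le, ← ENNReal.rpow_mul, ENNReal.toReal_inv, inv_mul_eq_div,
    mul_comm, mul_div_assoc, ENNReal.ofReal_rpow_of_pos hl, ← ENNReal.ofReal_div_of_pos hl,
    ← Real.rpow_sub_one hl.ne']

/- The hypothesis on `w` holds for the weights of the weak Lebesgue space dual to `L^{P/p,1}`; this
is Hölder's inequality in Lorentz spaces. -/
lemma lintegral_mul_rpow_le_lorentzNorm_rpow {μ : Measure α} [SFinite μ] {w g : α → ℝ≥0∞}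
    (hw : Measurable w) (hg : Measurable g) {P A : ℝ≥0∞} (hP : P ≠ 0) (hP' : P ≠ ∞) (hA : A ≠ ∞)
    {p : ℝ} (hp : 0 < p)
    (hwA : ∀ s, MeasurableSet s → ∫⁻ x in s, w x ∂μ ≤ A * μ s ^ (p / P.toReal)) :
    ∫⁻ x, w x * g x ^ p ∂μ ≤
      A * (ENNReal.ofReal p / P) * lorentzNorm μ P (ENNReal.ofReal p) g ^ p := by
  calc ∫⁻ x, w x * g x ^ p ∂μ
      = ∫⁻ x, g x ^ p ∂μ.withDensity w :=
        (lintegral_withDensity_eq_lintegral_mul _ hw (hg.pow_const p)).symm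
    _ = ENNReal.ofReal p * ∫⁻ l in Ioi (0 : ℝ),
          μ.withDensity w {x | ENNReal.ofReal l < g x} * ENNReal.ofReal (l ^ (p - 1)) :=
        lintegral_rpow_eq_lintegral_meas_ofReal_lt_mul _ hg hp
    _ ≤ ENNReal.ofReal p * ∫⁻ l in Ioi (0 : ℝ), A *
          (μ {x | ENNReal.ofReal l < g x} ^ (p / P.toReal) * ENNReal.ofReal (l ^ (p - 1))) := by
        refine mul_le_mul_right (lintegral_mono fun l ↦ ?_) _
        have hset : MeasurableSet {x | ENNReal.ofReal l < g x} :=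
          measurableSet_lt measurable_const hg
        rw [withDensity_apply _ hset, ← mul_assoc]
        exact mul_le_mul_left (hwA _ hset) _
    _ = A * (ENNReal.ofReal p / P) * lorentzNorm μ P (ENNReal.ofReal p) g ^ p := by
        rw [lintegral_const_mul' _ _ hA, lorentzNorm_rpow hp, ← mul_assoc, mul_assoc A,
          ← mul_assoc (_ / P), ENNReal.div_mul_cancel hP hP', mul_left_comm, mul_assoc]

end LayerCake

section PowerWeight

lemma setLIntegral_ball_ofReal_abs_sub_rpow {a : ℝ} (ha : a < 1) (t : ℝ) {m : ℝ} (hm : 0 < m) :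
    ∫⁻ s in Metric.ball t m, ENNReal.ofReal (|t - s| ^ (-a)) =
      2 * ENNReal.ofReal (m ^ (1 - a) / (1 - a)) := by
  have hhalf : ∫⁻ s in Ioo 0 m, ENNReal.ofReal (|s| ^ (-a)) =
      ENNReal.ofReal (m ^ (1 - a) / (1 - a)) := by
    rw [← neg_add_eq_sub a, ← lintegral_Ioo_zero_ofReal_rpow (by linarith) hm.le]
    exact setLIntegral_congr_fun measurableSet_Ioo fun s hs ↦ by simp only [abs_of_pos hs.1]
  have hneg : ∫⁻ s in Ioo (-m) 0, ENNReal.ofReal (|s| ^ (-a)) =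
      ∫⁻ s in Ioo 0 m, ENNReal.ofReal (|s| ^ (-a)) := by
    have := (Measure.measurePreserving_neg (volume : Measure ℝ)).setLIntegral_comp_preimage_emb
      (MeasurableEquiv.neg ℝ).measurableEmbedding (fun s ↦ ENNReal.ofReal (|s| ^ (-a))) (Ioo 0 m)
    simpa using this
  have htrans : ∫⁻ s in Metric.ball t m, ENNReal.ofReal (|t - s| ^ (-a)) =
      ∫⁻ s in Ioo (-m) m, ENNReal.ofReal (|s| ^ (-a)) := by
    have := (Measure.measurePreserving_sub_left volume t).setLIntegral_comp_preimage_emb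
      (MeasurableEquiv.subLeft t).measurableEmbedding (fun s ↦ ENNReal.ofReal (|s| ^ (-a)))
      (Ioo (-m) m)
    simpa [Real.ball_eq_Ioo] using this
  rw [htrans, ← Ioc_union_Ioo_eq_Ioo (neg_nonpos.2 hm.le) hm, lintegral_union measurableSet_Ioo,
    ← restrict_Ioo_eq_restrict_Ioc, hneg, hhalf, two_mul]
  exact Set.disjoint_left.2 fun s hs hs' ↦ hs.2.not_gt hs'.1

/- Split at distance `|E|` from `t`: outside that ball the weight is at most `|E|^{-a}`. -/
lemma setLIntegral_ofReal_abs_sub_rpow_le {a : ℝ} (ha0 : 0 ≤ a) (ha1 : a < 1) (t : ℝ)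
    (E : Set ℝ) :
    ∫⁻ s in E, ENNReal.ofReal (|t - s| ^ (-a)) ≤
      ENNReal.ofReal (2 / (1 - a) + 1) * volume E ^ (1 - a) := by
  have ha : 0 < 1 - a := sub_pos.2 ha1
  rcases eq_or_ne (volume E) ∞ with hE | hE
  · rw [hE, ENNReal.top_rpow_of_pos ha, ENNReal.mul_top (ENNReal.ofReal_pos.2 (by positivity)).ne']
    exact le_top
  rcases eq_or_ne (volume E) 0 with hE0 | hE0
  · simp [setLIntegral_measure_zero _ _ hE0]
  set m := (volume E).toReal
  have hm0 : 0 < m := ENNReal.toReal_pos hE0 hE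
  have hvol : volume E = ENNReal.ofReal m := (ENNReal.ofReal_toReal hE).symm
  have hfar : ∫⁻ s in E \ Metric.ball t m, ENNReal.ofReal (|t - s| ^ (-a)) ≤
      ENNReal.ofReal (m ^ (1 - a)) := by
    calc ∫⁻ s in E \ Metric.ball t m, ENNReal.ofReal (|t - s| ^ (-a))
        ≤ ∫⁻ _ in E \ Metric.ball t m, ENNReal.ofReal (m ^ (-a)) := by
          refine setLIntegral_mono measurable_const fun s hs ↦ ENNReal.ofReal_le_ofReal ?_
          have hs' : m ≤ |t - s| := by simpa [Real.dist_eq, abs_sub_comm] using hs.2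
          exact Real.rpow_le_rpow_of_nonpos hm0 hs' (neg_nonpos.2 ha0)
      _ ≤ ENNReal.ofReal (m ^ (-a)) * volume E := by
          rw [setLIntegral_const]; gcongr; exact sdiff_subset
      _ = ENNReal.ofReal (m ^ (1 - a)) := by
          rw [hvol, ← ENNReal.ofReal_mul (by positivity), ← Real.rpow_add_one hm0.ne',
            neg_add_eq_sub]
  calc ∫⁻ s in E, ENNReal.ofReal (|t - s| ^ (-a))
      ≤ (∫⁻ s in Metric.ball t m, ENNReal.ofReal (|t - s| ^ (-a))) +
          ∫⁻ s in E \ Metric.ball t m, ENNReal.ofReal (|t - s| ^ (-a)) :=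
        (lintegral_mono_set (subset_union_right.trans union_sdiff_self.superset)).trans
          (lintegral_union_le _ _ _)
    _ ≤ 2 * ENNReal.ofReal (m ^ (1 - a) / (1 - a)) + ENNReal.ofReal (m ^ (1 - a)) := by
        rw [setLIntegral_ball_ofReal_abs_sub_rpow ha1 t hm0]
        gcongr
    _ = ENNReal.ofReal (2 / (1 - a) + 1) * volume E ^ (1 - a) := by
        rw [hvol, ENNReal.ofReal_rpow_of_pos hm0, ← ENNReal.ofReal_mul (by positivity),
          ← ENNReal.ofReal_ofNat 2, ← ENNReal.ofReal_mul (by positivity),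
          ← ENNReal.ofReal_add (by positivity) (by positivity)]
        congr 1
        ring

end PowerWeight

section MinkowskiIntegral

variable {α β : Type*} [MeasurableSpace α] [MeasurableSpace β]

lemma measurable_eLpNorm {ε : Type*} [TopologicalSpace ε] [ContinuousENorm ε]
    {ν : Measure β} [SFinite ν] {f : α → β → ε} (hf : StronglyMeasurable (Function.uncurry f))
    (p : ℝ≥0∞) : Measurable fun s ↦ eLpNorm (f s) p ν := by
  have hmeas : Measurable (Function.uncurry fun s x ↦ ‖f s x‖ₑ) := hf.enorm
  rcases eq_or_ne p 0 with rfl | hp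
  · simp
  rcases eq_or_ne p ∞ with rfl | hp'
  · refine measurable_of_Iic fun c ↦ ?_
    have hset : (fun s ↦ eLpNorm (f s) ∞ ν) ⁻¹' Iic c = {s | ν {x | c < ‖f s x‖ₑ} = 0} := by
      ext s
      simp only [eLpNorm_exponent_top, mem_preimage, mem_Iic, mem_ofPred_eq, ← not_le]
      exact ⟨fun h ↦ (enorm_ae_le_eLpNormEssSup (f s) ν).mono fun x hx ↦ hx.trans h,
        eLpNormEssSup_le_of_ae_enorm_bound⟩
    rw [hset]
    exact measurable_measure_prodMk_left (hmeas measurableSet_Ioi) (measurableSet_singleton 0)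
  · simp_rw [eLpNorm_eq_lintegral_rpow_enorm_toReal hp hp']
    exact (hmeas.pow_const _).lintegral_prod_right.pow_const _

lemma exists_simpleFunc_le_lt_lintegral {ν : Measure β} [SigmaFinite ν] {f : β → ℝ≥0∞}
    {L : ℝ≥0∞} (hL : L < ∫⁻ x, f x ∂ν) :
    ∃ g : SimpleFunc β NNReal, (∀ x, (g x : ℝ≥0∞) ≤ f x) ∧ ∫⁻ x, g x ∂ν ≠ ∞ ∧ L < ∫⁻ x, g x ∂ν := by
  simp_rw [lintegral_eq_nnreal f, lt_iSup_iff, ← SimpleFunc.lintegral_eq_lintegral,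
    SimpleFunc.coe_map] at hL
  obtain ⟨g₀, hg₀, hL₀⟩ := hL
  obtain ⟨g, hg, hfin, hLg⟩ := SimpleFunc.exists_lt_lintegral_simpleFunc_of_lt_lintegral hL₀
  exact ⟨g, fun x ↦ (ENNReal.coe_le_coe.2 (hg x)).trans (hg₀ x), hfin.ne, hLg⟩

lemma le_rpow_of_le_rpow_mul {p q : ℝ} (hpq : q.HolderConjugate p) {A B : ℝ≥0∞} (hA : A ≠ ∞)
    (hAB : A ≤ A ^ (1 / q) * B) : A ≤ B ^ p := by
  rcases eq_or_ne A 0 with rfl | hA0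
  · exact zero_le
  have hsplit : A = A ^ (1 / q) * A ^ (1 / p) := by
    rw [← ENNReal.rpow_add _ _ hA0 hA, one_div, one_div, hpq.inv_add_inv_eq_one, ENNReal.rpow_one]
  have hB : A ^ (1 / p) ≤ B := by
    refine (ENNReal.mul_le_mul_iff_right ?_ ?_).1 (hsplit.symm.trans_le hAB)
    · simp [hA0, hA]
    · exact ENNReal.rpow_ne_top_of_nonneg hpq.one_div_nonneg hA
  rwa [one_div, ENNReal.rpow_inv_le_iff hpq.symm.pos] at hB

variable {μ : Measure α} [SFinite μ] {ν : Measure β} {K : α → β → ℝ≥0∞}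

/- For `g ≤ G^p` of finite integral `A`, Hölder's inequality applied to `g = g^{1/p'} g^{1/p}` gives
`A ≤ ∫ g^{1/p'} G ≤ A^{1/p'} B`, hence `A ≤ B^p`. -/
lemma lintegral_rpow_lintegral_le [SigmaFinite ν] (hK : Measurable (Function.uncurry K)) {p : ℝ}
    (hp : 1 < p) :
    ∫⁻ x, (∫⁻ s, K s x ∂μ) ^ p ∂ν ≤ (∫⁻ s, (∫⁻ x, K s x ^ p ∂ν) ^ (1 / p) ∂μ) ^ p := by
  refine le_of_forall_lt fun L hL ↦ ?_
  obtain ⟨g, hg, hfin, hLg⟩ := exists_simpleFunc_le_lt_lintegral hL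
  refine hLg.trans_le ?_
  have hp0 : 0 < p := zero_lt_one.trans hp
  have hpq := (Real.HolderConjugate.conjExponent hp).symm
  set q := Real.conjExponent p
  have hq0 : 0 < q := hpq.pos
  have hsum : 1 / q + 1 / p = 1 := by simpa using hpq.inv_add_inv_eq_one
  have hgm : Measurable fun x ↦ (g x : ℝ≥0∞) := g.measurable.coe_nnreal_ennreal
  set A := ∫⁻ x, g x ∂ν
  set B := ∫⁻ s, (∫⁻ x, K s x ^ p ∂ν) ^ (1 / p) ∂μ
  have hAB : A ≤ A ^ (1 / q) * B := by
    calc A = ∫⁻ x, (g x : ℝ≥0∞) ^ (1 / q) * (g x : ℝ≥0∞) ^ (1 / p) ∂ν := by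
          simp_rw [← ENNReal.rpow_add_of_nonneg _ _ hpq.one_div_nonneg hpq.symm.one_div_nonneg,
            hsum, ENNReal.rpow_one, A]
      _ ≤ ∫⁻ x, (g x : ℝ≥0∞) ^ (1 / q) * ∫⁻ s, K s x ∂μ ∂ν := by
          gcongr with x
          exact (ENNReal.rpow_le_rpow (hg x) (by positivity)).trans_eq
            (by rw [one_div, ENNReal.rpow_rpow_inv hp0.ne'])
      _ = ∫⁻ s, ∫⁻ x, (g x : ℝ≥0∞) ^ (1 / q) * K s x ∂ν ∂μ := by
          rw [lintegral_lintegral_swap (by fun_prop)]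
          exact lintegral_congr fun x ↦ (lintegral_const_mul _ hK.of_uncurry_right).symm
      _ ≤ ∫⁻ s, A ^ (1 / q) * (∫⁻ x, K s x ^ p ∂ν) ^ (1 / p) ∂μ := by
          gcongr with s
          refine (ENNReal.lintegral_mul_le_Lp_mul_Lq ν hpq (hgm.pow_const _).aemeasurable
            hK.of_uncurry_left.aemeasurable).trans_eq ?_
          simp_rw [one_div, ENNReal.rpow_inv_rpow hq0.ne', A]
      _ = A ^ (1 / q) * B :=
          lintegral_const_mul' _ _ (ENNReal.rpow_ne_top_of_nonneg (by positivity) hfin)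
  exact le_rpow_of_le_rpow_mul hpq hfin hAB

theorem eLpNorm_lintegral_le_lintegral_eLpNorm [SigmaFinite ν]
    (hK : Measurable (Function.uncurry K)) {p : ℝ≥0∞} (hp : 1 ≤ p) :
    eLpNorm (fun x ↦ ∫⁻ s, K s x ∂μ) p ν ≤ ∫⁻ s, eLpNorm (K s) p ν ∂μ := by
  rcases eq_or_ne p ∞ with rfl | hp'
  · have hle : ∀ᵐ s ∂μ, ∀ᵐ x ∂ν, K s x ≤ eLpNorm (K s) ∞ ν :=
      .of_forall fun s ↦ by simpa using enorm_ae_le_eLpNormEssSup (K s) ν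
    have hset : MeasurableSet {z : α × β | K z.1 z.2 ≤ eLpNorm (K z.1) ∞ ν} :=
      measurableSet_le hK ((measurable_eLpNorm hK.stronglyMeasurable ∞).comp measurable_fst)
    exact eLpNormEssSup_le_of_ae_enorm_bound
      (((Measure.ae_ae_comm hset).1 hle).mono fun x hx ↦ lintegral_mono_ae hx)
  rcases hp.eq_or_lt with rfl | hp
  · simp only [eLpNorm_one_eq_lintegral_enorm, enorm_eq_self]
    exact (lintegral_lintegral_swap hK.aemeasurable).ge
  · have hp0 : p ≠ 0 := (zero_lt_one.trans hp).ne'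
    have hp1 : 1 < p.toReal := by
      simpa using ENNReal.toReal_strict_mono hp' hp
    simp only [eLpNorm_eq_lintegral_rpow_enorm_toReal hp0 hp', enorm_eq_self]
    rw [one_div, ENNReal.rpow_inv_le_iff (ENNReal.toReal_pos hp0 hp'), ← one_div]
    exact lintegral_rpow_lintegral_le hK hp1

theorem eLpNorm_integral_le_lintegral_eLpNorm [SigmaFinite ν] {E : Type*} [NormedAddCommGroup E]
    [NormedSpace ℝ E] {F : α → β → E} (hF : StronglyMeasurable (Function.uncurry F)) {p : ℝ≥0∞}
    (hp : 1 ≤ p) :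
    eLpNorm (fun x ↦ ∫ s, F s x ∂μ) p ν ≤ ∫⁻ s, eLpNorm (F s) p ν ∂μ := by
  calc eLpNorm (fun x ↦ ∫ s, F s x ∂μ) p ν
      ≤ eLpNorm (fun x ↦ ∫⁻ s, ‖F s x‖ₑ ∂μ) p ν :=
        eLpNorm_mono_enorm fun x ↦ enorm_integral_le_lintegral_enorm _
    _ ≤ ∫⁻ s, eLpNorm (fun x ↦ ‖F s x‖ₑ) p ν ∂μ :=
        eLpNorm_lintegral_le_lintegral_eLpNorm hF.enorm hp
    _ = ∫⁻ s, eLpNorm (F s) p ν ∂μ := by simp only [eLpNorm_enorm]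

end MinkowskiIntegral

section Fourier

open scoped FourierTransform RealInnerProductSpace

variable {V F : Type*} [NormedAddCommGroup V] [InnerProductSpace ℝ V] [FiniteDimensional ℝ V]
  [MeasurableSpace V] [BorelSpace V] [NormedAddCommGroup F]

lemma fourier_eq_zero_of_not_integrable [NormedSpace ℂ F] {h : V → F} (hi : ¬ Integrable h) :
    𝓕 h = 0 := by
  ext ξ
  rw [Real.fourier_eq]
  exact integral_undef (mt (Real.fourierIntegral_convergent_iff ξ).1 hi)

lemma enorm_fourier_le_lintegral [NormedSpace ℂ F] (h : V → F) (ξ : V) :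
    ‖𝓕 h ξ‖ₑ ≤ ∫⁻ y, ‖h y‖ₑ := by
  rw [Real.fourier_eq]
  refine (enorm_integral_le_lintegral_enorm _).trans_eq (lintegral_congr fun y ↦ ?_)
  rw [← ofReal_norm, Circle.norm_smul, ofReal_norm]

lemma continuous_fourier_of_integrable [NormedSpace ℂ F] {h : V → F} (hi : Integrable h) :
    Continuous (𝓕 h) :=
  VectorFourier.fourierIntegral_continuous Real.continuous_fourierChar
    (innerSL ℝ).continuous₂ hi

lemma stronglyMeasurable_fourier [NormedSpace ℂ F] (h : V → F) : StronglyMeasurable (𝓕 h) := by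
  by_cases hi : Integrable h
  · exact (continuous_fourier_of_integrable hi).stronglyMeasurable
  · rw [fourier_eq_zero_of_not_integrable hi]
    exact stronglyMeasurable_zero

variable [InnerProductSpace ℂ F] [CompleteSpace F] {h : V → F}

lemma coeFn_fourier_toLp_ae_eq (hi : Integrable h) (h2 : MemLp h 2) :
    (𝓕 (h2.toLp h) : Lp F 2 (volume : Measure V)) =ᵐ[volume] 𝓕 h := by
  refine ae_eq_of_integral_contDiff_smul_eq ((Lp.memLp _).locallyIntegrable one_le_two)
    (continuous_fourier_of_integrable hi).locallyIntegrable fun g hg hgc ↦ ?_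
  set f' : Lp F 2 (volume : Measure V) := 𝓕 (h2.toLp h)
  let φ : SchwartzMap V ℂ := (hgc.comp_left (g := Complex.ofRealCLM) (map_zero _)).toSchwartzMap
    (Complex.ofRealCLM.contDiff.comp hg)
  have duality : ∫ x, φ x • f' x = ∫ x, 𝓕 φ x • h2.toLp h x := by
    simpa only [TemperedDistribution.fourier_apply, Lp.toTemperedDistribution_apply] using
      (congrArg (fun T ↦ T φ) (Lp.fourier_toTemperedDistribution_eq (h2.toLp h))).symm
  have selfAdjoint : ∫ x, 𝓕 φ x • h x = ∫ x, φ x • 𝓕 h x := by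
    rw [SchwartzMap.fourier_coe]
    simpa using! VectorFourier.integral_fourierIntegral_smul_eq_flip (L := innerₗ V)
      Real.continuous_fourierChar (innerSL ℝ).continuous₂ φ.integrable hi
  calc ∫ x, g x • f' x = ∫ x, φ x • f' x := by rfl
    _ = ∫ x, 𝓕 φ x • h2.toLp h x := duality
    _ = ∫ x, 𝓕 φ x • h x := integral_congr_ae (h2.coeFn_toLp.mono fun x hx ↦ by simp only [hx])
    _ = ∫ x, φ x • 𝓕 h x := selfAdjoint
    _ = ∫ x, g x • 𝓕 h x := by rfl

lemma eLpNorm_two_fourier_le (h : V → F) : eLpNorm (𝓕 h) 2 ≤ eLpNorm h 2 := by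
  by_cases hi : Integrable h
  swap
  · simp [fourier_eq_zero_of_not_integrable hi]
  by_cases h2 : MemLp h 2
  swap
  · have : eLpNorm h 2 = ∞ := by simpa [MemLp, hi.1] using h2
    exact this ▸ le_top
  rw [← eLpNorm_congr_ae (coeFn_fourier_toLp_ae_eq hi h2), ← eLpNorm_congr_ae h2.coeFn_toLp,
    ← Lp.enorm_def, ← Lp.enorm_def, ← ofReal_norm, ← ofReal_norm, Lp.norm_fourier_eq]

end Fourier

section HausdorffYoung

open scoped FourierTransform NNReal

variable {V F : Type*} [NormedAddCommGroup V] [InnerProductSpace ℝ V] [FiniteDimensional ℝ V]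
  [MeasurableSpace V] [BorelSpace V] [NormedAddCommGroup F] [InnerProductSpace ℂ F]
  [CompleteSpace F] {h : V → F}

lemma volume_lt_enorm_fourier_le (hi : Integrable h) {S : Set V} (hS : MeasurableSet S)
    {c : ℝ≥0∞} (hc : c ≠ 0) (hc' : c ≠ ∞) (hSc : ∫⁻ y in Sᶜ, ‖h y‖ₑ ≤ c / 2) :
    volume {ξ | c < ‖𝓕 h ξ‖ₑ} ≤ (2 / c) ^ (2 : ℝ) * ∫⁻ y in S, ‖h y‖ₑ ^ (2 : ℝ) := by
  have split (ξ : V) : 𝓕 h ξ = 𝓕 (S.indicator h) ξ + 𝓕 (Sᶜ.indicator h) ξ := by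
    have := VectorFourier.fourierIntegral_add (L := innerₗ V) Real.continuous_fourierChar
      (innerSL ℝ).continuous₂ (hi.indicator hS) (hi.indicator hS.compl)
    rw [indicator_self_add_compl] at this
    exact congrFun this ξ
  have small (ξ : V) : ‖𝓕 (Sᶜ.indicator h) ξ‖ₑ ≤ c / 2 := by
    refine (enorm_fourier_le_lintegral _ ξ).trans (le_of_eq_of_le ?_ hSc)
    simp_rw [enorm_indicator_eq_indicator_enorm, lintegral_indicator hS.compl]
  have subset : {ξ | c < ‖𝓕 h ξ‖ₑ} ⊆ {ξ | c / 2 ≤ ‖𝓕 (S.indicator h) ξ‖ₑ} := by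
    intro ξ (hξ : c < ‖𝓕 h ξ‖ₑ)
    by_contra! hlt
    refine hξ.not_ge ?_
    calc ‖𝓕 h ξ‖ₑ ≤ ‖𝓕 (S.indicator h) ξ‖ₑ + ‖𝓕 (Sᶜ.indicator h) ξ‖ₑ :=
          split ξ ▸ enorm_add_le _ _
      _ ≤ c / 2 + c / 2 := add_le_add (not_le.1 hlt).le (small ξ)
      _ = c := ENNReal.add_halves c
  have half_ne_top : c / 2 ≠ ∞ := ENNReal.div_ne_top hc' two_ne_zero
  calc volume {ξ | c < ‖𝓕 h ξ‖ₑ}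
      ≤ volume {ξ | c / 2 ≤ ‖𝓕 (S.indicator h) ξ‖ₑ} := measure_mono subset
    _ ≤ (c / 2)⁻¹ ^ (2 : ℝ) * eLpNorm (𝓕 (S.indicator h)) 2 ^ (2 : ℝ) := by
        simpa using meas_ge_le_mul_pow_eLpNorm_enorm volume two_ne_zero ENNReal.ofNat_ne_top
          (stronglyMeasurable_fourier (S.indicator h)).aestronglyMeasurable
          (ENNReal.half_pos hc).ne' (by simp [half_ne_top])
    _ ≤ (c / 2)⁻¹ ^ (2 : ℝ) * eLpNorm (S.indicator h) 2 ^ (2 : ℝ) := by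
        gcongr
        exact eLpNorm_two_fourier_le _
    _ = (2 / c) ^ (2 : ℝ) * ∫⁻ y in S, ‖h y‖ₑ ^ (2 : ℝ) := by
        rw [ENNReal.inv_div (.inl ENNReal.ofNat_ne_top) (.inl two_ne_zero),
          eLpNorm_indicator_eq_eLpNorm_restrict hS,
          eLpNorm_eq_lintegral_rpow_enorm_toReal two_ne_zero ENNReal.ofNat_ne_top,
          ENNReal.toReal_ofNat, ← ENNReal.rpow_mul, one_div_mul_cancel two_ne_zero,
          ENNReal.rpow_one]

lemma volume_lt_enorm_fourier_le_setLIntegral (hm : StronglyMeasurable h)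
    (hi : Integrable h) {p : ℝ} {M : ℝ≥0∞} (hM : ∫⁻ y, ‖h y‖ₑ ^ p ≤ M) (hM0 : M ≠ 0)
    (hM' : M ≠ ∞) {c : ℝ≥0∞} (hc : c ≠ 0) (hc' : c ≠ ∞) :
    volume {ξ | c < ‖𝓕 h ξ‖ₑ} ≤
      (2 / c) ^ (2 : ℝ) * ∫⁻ y in {y | c < 2 * M / ‖h y‖ₑ ^ (p - 1)}, ‖h y‖ₑ ^ (2 : ℝ) := by
  have hmeas : Measurable fun y ↦ ‖h y‖ₑ := hm.enorm
  have hS : MeasurableSet {y | c < 2 * M / ‖h y‖ₑ ^ (p - 1)} :=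
    measurableSet_lt measurable_const (by fun_prop)
  refine volume_lt_enorm_fourier_le hi hS hc hc' ?_
  have pointwise (y : V) (hy : 2 * M / ‖h y‖ₑ ^ (p - 1) ≤ c) :
      ‖h y‖ₑ ≤ c / (2 * M) * ‖h y‖ₑ ^ p := by
    rcases eq_or_ne ‖h y‖ₑ 0 with h0 | h0
    · simp [h0]
    have large : 2 * M ≤ c * ‖h y‖ₑ ^ (p - 1) := by
      rwa [ENNReal.div_le_iff (by simp [h0]) (by finiteness)] at hy
    calc ‖h y‖ₑ ≤ ‖h y‖ₑ * (c * ‖h y‖ₑ ^ (p - 1) / (2 * M)) :=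
          le_mul_of_one_le_right' <| by
            rwa [ENNReal.le_div_iff_mul_le (.inl (by simp [hM0])) (.inl (by finiteness)),
              one_mul]
      _ = c / (2 * M) * ‖h y‖ₑ ^ p := by
          rw [← sub_add_cancel p 1, ENNReal.rpow_add _ _ h0 enorm_ne_top, ENNReal.rpow_one,
            add_sub_cancel_right]
          simp only [div_eq_mul_inv]
          ring
  calc ∫⁻ y in {y | c < 2 * M / ‖h y‖ₑ ^ (p - 1)}ᶜ, ‖h y‖ₑ
      ≤ ∫⁻ y in {y | c < 2 * M / ‖h y‖ₑ ^ (p - 1)}ᶜ, c / (2 * M) * ‖h y‖ₑ ^ p :=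
        setLIntegral_mono' hS.compl fun y hy ↦ pointwise y (not_lt.1 hy)
    _ ≤ ∫⁻ y, c / (2 * M) * ‖h y‖ₑ ^ p := setLIntegral_le_lintegral _ _
    _ ≤ c / (2 * M) * M := by
        rw [lintegral_const_mul _ (hmeas.pow_const p)]
        gcongr
    _ = c / 2 := by
        rw [← ENNReal.mul_div_mul_right c 2 hM0 hM', ENNReal.mul_div_right_comm]

lemma rpow_two_mul_div_rpow_rpow {x : ℝ≥0∞} (hx : x ≠ ∞) (A : ℝ≥0∞) {r : ℝ} (hr : 2 < r) :
    x ^ (2 : ℝ) * (A / x ^ (r / (r - 1) - 1)) ^ (r - 2) = A ^ (r - 2) * x ^ (r / (r - 1)) := by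
  have hr1 : 0 < r - 1 := by linarith
  have hexp : 2 + -((r / (r - 1) - 1) * (r - 2)) = r / (r - 1) := by field_simp; ring
  rcases eq_or_ne x 0 with rfl | h0
  · rw [ENNReal.zero_rpow_of_pos two_pos, ENNReal.zero_rpow_of_pos (div_pos (by linarith) hr1),
      zero_mul, mul_zero]
  rw [ENNReal.div_rpow_of_nonneg _ _ (by linarith), ← ENNReal.rpow_mul, div_eq_mul_inv,
    ← ENNReal.rpow_neg, mul_left_comm, ← ENNReal.rpow_add _ _ h0 hx, hexp]

lemma volume_ofReal_lt_enorm_fourier_mul_rpow_le (hm : StronglyMeasurable h) (hi : Integrable h)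
    {p : ℝ} {M : ℝ≥0∞} (hM : ∫⁻ y, ‖h y‖ₑ ^ p ≤ M) (hM0 : M ≠ 0) (hM' : M ≠ ∞) {l : ℝ} (hl : 0 < l)
    (s : ℝ) :
    volume {ξ | ENNReal.ofReal l < ‖𝓕 h ξ‖ₑ} * ENNReal.ofReal (l ^ s) ≤
      4 * ((∫⁻ y in {y | ENNReal.ofReal l < 2 * M / ‖h y‖ₑ ^ (p - 1)}, ‖h y‖ₑ ^ (2 : ℝ)) *
        ENNReal.ofReal (l ^ (s - 2))) := by
  have hpow : (2 / ENNReal.ofReal l) ^ (2 : ℝ) * ENNReal.ofReal (l ^ s) =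
      4 * ENNReal.ofReal (l ^ (s - 2)) := by
    rw [← ENNReal.ofReal_ofNat 2, ← ENNReal.ofReal_ofNat 4, ← ENNReal.ofReal_div_of_pos hl,
      ENNReal.ofReal_rpow_of_pos (by positivity), ← ENNReal.ofReal_mul (by positivity),
      ← ENNReal.ofReal_mul (by positivity), Real.div_rpow two_pos.le hl.le, div_mul_eq_mul_div,
      mul_div_assoc, ← Real.rpow_sub hl]
    norm_num
  rw [mul_left_comm, ← hpow, mul_left_comm, ← mul_assoc]
  exact mul_le_mul_left (volume_lt_enorm_fourier_le_setLIntegral hm hi hM hM0 hM'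
    (ENNReal.ofReal_pos.2 hl).ne' ENNReal.ofReal_ne_top) _

/- At height `l`, only the part of `h` where `‖h‖ ^ (p - 1)` is below `2M / l` matters; the layer
cake formula for the measure `‖h‖² dy` then sums up the `L²` bounds. -/
lemma lintegral_enorm_fourier_rpow_le (hm : StronglyMeasurable h) (hi : Integrable h) {r : ℝ}
    (hr : 2 < r) {M : ℝ≥0∞} (hM : ∫⁻ y, ‖h y‖ₑ ^ (r / (r - 1)) ≤ M) (hM0 : M ≠ 0) (hM' : M ≠ ∞) :
    ∫⁻ ξ, ‖𝓕 h ξ‖ₑ ^ r ≤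
      ENNReal.ofReal r * (4 * 2 ^ (r - 2) / ENNReal.ofReal (r - 2)) * M ^ (r - 1) := by
  have hr2 : 0 < r - 2 := by linarith
  set p := r / (r - 1)
  let G (y : V) : ℝ≥0∞ := 2 * M / ‖h y‖ₑ ^ (p - 1)
  have hG : Measurable G := by fun_prop
  let ρ : Measure V := volume.withDensity fun y ↦ ‖h y‖ₑ ^ (2 : ℝ)
  have level {l : ℝ} (hl : 0 < l) :
      volume {ξ | ENNReal.ofReal l < ‖𝓕 h ξ‖ₑ} * ENNReal.ofReal (l ^ (r - 1)) ≤
        4 * (ρ {y | ENNReal.ofReal l < G y} * ENNReal.ofReal (l ^ (r - 2 - 1))) := by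
    rw [withDensity_apply _ (measurableSet_lt measurable_const hG), sub_right_comm]
    exact volume_ofReal_lt_enorm_fourier_mul_rpow_le hm hi hM hM0 hM' hl _
  calc ∫⁻ ξ, ‖𝓕 h ξ‖ₑ ^ r
      = ENNReal.ofReal r * ∫⁻ l in Ioi (0 : ℝ),
          volume {ξ | ENNReal.ofReal l < ‖𝓕 h ξ‖ₑ} * ENNReal.ofReal (l ^ (r - 1)) :=
        lintegral_rpow_eq_lintegral_meas_ofReal_lt_mul _ (stronglyMeasurable_fourier h).enorm
          (by linarith)
    _ ≤ ENNReal.ofReal r * ∫⁻ l in Ioi (0 : ℝ),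
          4 * (ρ {y | ENNReal.ofReal l < G y} * ENNReal.ofReal (l ^ (r - 2 - 1))) :=
        mul_le_mul_right (setLIntegral_mono' measurableSet_Ioi fun l hl ↦ level hl) _
    _ = ENNReal.ofReal r * (4 * ((∫⁻ y, G y ^ (r - 2) ∂ρ) / ENNReal.ofReal (r - 2))) := by
        rw [lintegral_const_mul' _ _ (by finiteness),
          lintegral_rpow_eq_lintegral_meas_ofReal_lt_mul ρ hG hr2,
          mul_comm (ENNReal.ofReal (r - 2)),
          ENNReal.mul_div_cancel_right (by simpa using hr2) ENNReal.ofReal_ne_top]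
    _ ≤ ENNReal.ofReal r * (4 * ((2 * M) ^ (r - 2) * M / ENNReal.ofReal (r - 2))) := by
        rw [lintegral_withDensity_eq_lintegral_mul _ (by fun_prop) (by fun_prop)]
        simp only [Pi.mul_apply, G, p, rpow_two_mul_div_rpow_rpow enorm_ne_top _ hr]
        rw [lintegral_const_mul _ (by fun_prop)]
        gcongr
    _ = ENNReal.ofReal r * (4 * 2 ^ (r - 2) / ENNReal.ofReal (r - 2)) * M ^ (r - 1) := by
        have hM1 : M ^ (r - 1) = M ^ (r - 2) * M := by
          rw [← sub_add_cancel (r - 1) 1, ENNReal.rpow_add _ _ hM0 hM', ENNReal.rpow_one, sub_sub,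
            one_add_one_eq_two]
        rw [hM1, ENNReal.mul_rpow_of_nonneg _ _ hr2.le]
        simp only [div_eq_mul_inv]
        ring

lemma eLpNorm_fourier_le_of_two_lt {r : ℝ} (hr : 2 < r) (h : V → F) :
    eLpNorm (𝓕 h) (ENNReal.ofReal r) ≤
      (ENNReal.ofReal r * (4 * 2 ^ (r - 2) / ENNReal.ofReal (r - 2))) ^ (1 / r) *
        eLpNorm h (ENNReal.ofReal (r / (r - 1))) := by
  have hr0 : 0 < r := by linarith
  have hr1 : 0 < r - 1 := by linarith
  have hp0 : 0 < r / (r - 1) := div_pos hr0 hr1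
  by_cases hi : Integrable h
  swap
  · simp [fourier_eq_zero_of_not_integrable hi]
  obtain ⟨g, hg, hgh⟩ := hi.1
  rw [funext (Real.fourier_congr_ae hgh), eLpNorm_congr_ae hgh]
  have gi : Integrable g := hi.congr hgh
  rw [eLpNorm_eq_lintegral_rpow_enorm_toReal (by simpa using hr0) ENNReal.ofReal_ne_top,
    eLpNorm_eq_lintegral_rpow_enorm_toReal (by simpa using hp0) ENNReal.ofReal_ne_top,
    ENNReal.toReal_ofReal hr0.le, ENNReal.toReal_ofReal hp0.le]
  set M := ∫⁻ y, ‖g y‖ₑ ^ (r / (r - 1)) with hM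
  rcases eq_or_ne M 0 with hM0 | hM0
  · have g0 : g =ᵐ[volume] 0 := by
      rw [hM, lintegral_eq_zero_iff (by fun_prop)] at hM0
      filter_upwards [hM0] with y hy
      simpa [hp0.not_gt, hp0] using hy
    have : 𝓕 g = 0 := by
      rw [funext (Real.fourier_congr_ae g0)]
      ext ξ
      simp [Real.fourier_eq]
    simp [this, hr0]
  rcases eq_or_ne M ∞ with hM' | hM'
  · rw [hM', ENNReal.top_rpow_of_pos (by positivity), ENNReal.mul_top]
    · exact le_top
    · simp [hr0, hr0.le, ENNReal.ofReal_ne_top]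
  calc (∫⁻ ξ, ‖𝓕 g ξ‖ₑ ^ r) ^ (1 / r)
      ≤ (ENNReal.ofReal r * (4 * 2 ^ (r - 2) / ENNReal.ofReal (r - 2)) *
          M ^ (r - 1)) ^ (1 / r) := by
        gcongr
        exact lintegral_enorm_fourier_rpow_le hg gi hr le_rfl hM0 hM'
    _ = (ENNReal.ofReal r * (4 * 2 ^ (r - 2) / ENNReal.ofReal (r - 2))) ^ (1 / r) *
        M ^ (1 / (r / (r - 1))) := by
      rw [ENNReal.mul_rpow_of_nonneg _ _ (by positivity), ← ENNReal.rpow_mul, one_div_div,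
        mul_one_div]

variable (V F) in
theorem exists_forall_eLpNorm_fourier_le {r r' : ℝ≥0∞} [r.HolderConjugate r'] (hr : 2 ≤ r) :
    ∃ C : ℝ≥0, ∀ h : V → F, eLpNorm (𝓕 h) r ≤ C * eLpNorm h r' := by
  rcases eq_or_ne r ∞ with rfl | hr'
  · obtain rfl : r' = 1 := ENNReal.HolderConjugate.unique ∞ r' 1
    refine ⟨1, fun h ↦ ?_⟩
    rw [eLpNorm_exponent_top, eLpNorm_one_eq_lintegral_enorm, ENNReal.coe_one, one_mul]
    exact eLpNormEssSup_le_of_ae_enorm_bound (.of_forall (enorm_fourier_le_lintegral h))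
  rcases hr.eq_or_lt with rfl | hr2
  · obtain rfl : r' = 2 := ENNReal.HolderConjugate.unique 2 r' 2
    exact ⟨1, fun h ↦ by simpa using eLpNorm_two_fourier_le h⟩
  lift r to ℝ≥0 using hr'
  have hr2' : 2 < (r : ℝ) := by exact_mod_cast hr2
  have : ENNReal.HolderConjugate r (ENNReal.ofReal (r / (r - 1))) := by
    simpa [Real.conjExponent] using
      (Real.HolderConjugate.conjExponent (one_lt_two.trans hr2')).ennrealOfReal
  obtain rfl := ENNReal.HolderConjugate.unique r r' (ENNReal.ofReal (r / (r - 1)))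
  obtain ⟨K, hK, bound⟩ : ∃ K ≠ ∞, ∀ h : V → F, eLpNorm (𝓕 h) (ENNReal.ofReal r) ≤
      K * eLpNorm h (ENNReal.ofReal (r / (r - 1))) := by
    refine ⟨_, ?_, eLpNorm_fourier_le_of_two_lt hr2'⟩
    finiteness
  lift K to ℝ≥0 using hK
  exact ⟨K, by simpa using bound⟩

end HausdorffYoung

section Dispersive

open scoped FourierTransform NNReal RealInnerProductSpace

lemma eLpNorm_comp_smul {V F : Type*} [NormedAddCommGroup V] [NormedSpace ℝ V]
    [FiniteDimensional ℝ V] [MeasureSpace V] [BorelSpace V] [(volume : Measure V).IsAddHaarMeasure]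
    [NormedAddCommGroup F] (g : V → F) {c : ℝ} (hc : c ≠ 0) (r : ℝ≥0∞) :
    eLpNorm (fun x ↦ g (c • x)) r =
      ENNReal.ofReal (|c| ^ (-(Module.finrank ℝ V * (1 / r).toReal))) * eLpNorm g r := by
  have hc' : 0 < |c| := abs_pos.2 hc
  have scale := (Homeomorph.smulOfNeZero c hc).measurableEmbedding.eLpNorm_map_measure
    (μ := volume) (p := r) (g := g)
  have hscale : ENNReal.ofReal |(c ^ Module.finrank ℝ V)⁻¹| ≠ 0 := by simp [hc]
  rw [show (Homeomorph.smulOfNeZero c hc : V → V) = (c • ·) from rfl,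
    Measure.map_addHaar_smul _ hc, eLpNorm_smul_measure_of_ne_zero hscale] at scale
  rw [← Function.comp_def, ← scale, smul_eq_mul, ENNReal.ofReal_rpow_of_pos (by positivity)]
  congr 2
  rw [abs_inv, abs_pow, ← Real.rpow_natCast, ← Real.rpow_neg hc'.le, ← Real.rpow_mul hc'.le,
    neg_mul]

variable {V : Type*} [NormedAddCommGroup V]

/-- The chirp `e^{i‖x‖²/(4τ)}`. Up to scaling, the propagator at time `τ` is a Fourier transform
between two multiplications by the chirp. -/
def chirp (τ : ℝ) (x : V) : ℂ :=
  Complex.exp (Complex.I * ((‖x‖ ^ 2 : ℝ) : ℂ) / (4 * (τ : ℂ)))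

lemma enorm_chirp (τ : ℝ) (x : V) : ‖chirp τ x‖ₑ = 1 := by
  have : Complex.I * ((‖x‖ ^ 2 : ℝ) : ℂ) / (4 * (τ : ℂ)) =
      ((‖x‖ ^ 2 / (4 * τ) : ℝ) : ℂ) * Complex.I := by push_cast; ring
  rw [chirp, this, ← ofReal_norm, Complex.norm_exp_ofReal_mul_I, ENNReal.ofReal_one]

variable [InnerProductSpace ℝ V]

lemma chirp_sub {τ : ℝ} (hτ : τ ≠ 0) (x y : V) :
    chirp τ (x - y) =
      chirp τ x * (Complex.exp (↑(-2 * π * ⟪y, (4 * π * τ)⁻¹ • x⟫) * Complex.I) * chirp τ y) := by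
  simp only [chirp]
  rw [← Complex.exp_add, ← Complex.exp_add, norm_sub_sq_real, real_inner_smul_right,
    real_inner_comm]
  congr 1
  have hτ' : (τ : ℂ) ≠ 0 := by exact_mod_cast hτ
  have hπ : (π : ℂ) ≠ 0 := by exact_mod_cast Real.pi_ne_zero
  push_cast
  field_simp
  ring

variable [FiniteDimensional ℝ V] [MeasurableSpace V] [BorelSpace V]

lemma schrod_eq_fourier (d : ℕ) {τ : ℝ} (hτ : τ ≠ 0) (f : V → ℂ) (x : V) :
    schrod d τ f x = (4 * (π : ℂ) * Complex.I * (τ : ℂ)) ^ (-(d : ℂ) / 2) *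
      (chirp τ x * 𝓕 (fun y ↦ chirp τ y * f y) ((4 * π * τ)⁻¹ • x)) := by
  simp only [schrod, if_neg hτ]
  rw [Real.fourier_eq', ← integral_const_mul (chirp τ x)]
  refine congrArg (_ * ·) (integral_congr_ae (.of_forall fun y ↦ ?_))
  change chirp τ (x - y) * f y = _
  rw [chirp_sub hτ, smul_eq_mul]
  ring

lemma enorm_schrod_eq (d : ℕ) {τ : ℝ} (hτ : τ ≠ 0) (f : V → ℂ) (x : V) :
    ‖schrod d τ f x‖ₑ = ENNReal.ofReal ((4 * π * |τ|) ^ (-(d : ℝ) / 2)) *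
      ‖𝓕 (fun y ↦ chirp τ y * f y) ((4 * π * τ)⁻¹ • x)‖ₑ := by
  rw [schrod_eq_fourier d hτ, enorm_mul, enorm_mul, enorm_chirp, one_mul, ← ofReal_norm (_ ^ _)]
  congr 2
  have hz : 4 * (π : ℂ) * Complex.I * (τ : ℂ) ≠ 0 := by simp [hτ, Real.pi_ne_zero]
  rw [Complex.norm_cpow_of_ne_zero hz]
  simp [abs_of_pos Real.pi_pos]

lemma eLpNorm_schrod_eq (d : ℕ) {τ : ℝ} (hτ : τ ≠ 0) (f : V → ℂ) (r : ℝ≥0∞) :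
    eLpNorm (schrod d τ f) r =
      ENNReal.ofReal ((4 * π * |τ|) ^ (-(d : ℝ) / 2 + Module.finrank ℝ V * (1 / r).toReal)) *
        eLpNorm (𝓕 fun y ↦ chirp τ y * f y) r := by
  have hc : (4 * π * τ)⁻¹ ≠ 0 := by simp [hτ, Real.pi_ne_zero]
  have hc' : |(4 * π * τ)⁻¹| = (4 * π * |τ|)⁻¹ := by
    rw [abs_inv, abs_mul, abs_of_pos (by positivity : 0 < 4 * π)]
  rw [eLpNorm_congr_enorm_ae (g := ((4 * π * |τ|) ^ (-(d : ℝ) / 2) : ℝ) • fun x ↦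
      𝓕 (fun y ↦ chirp τ y * f y) ((4 * π * τ)⁻¹ • x)) (.of_forall fun x ↦ ?_)]
  · rw [eLpNorm_const_smul, eLpNorm_comp_smul _ hc, Real.enorm_of_nonneg (by positivity), hc',
      Real.inv_rpow (by positivity), Real.rpow_neg (by positivity), inv_inv,
      Real.rpow_add (by positivity), ENNReal.ofReal_mul (by positivity),
      mul_assoc (ENNReal.ofReal _)]
  · rw [enorm_schrod_eq d hτ, Pi.smul_apply, enorm_smul, Real.enorm_of_nonneg (by positivity)]

variable (V) in
theorem exists_forall_eLpNorm_schrod_le {r r' : ℝ≥0∞} [r.HolderConjugate r'] (hr : 2 ≤ r) :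
    ∃ C : ℝ≥0, ∀ τ : ℝ, τ ≠ 0 → ∀ f : V → ℂ,
      eLpNorm (schrod (Module.finrank ℝ V) τ f) r ≤
        C * ENNReal.ofReal (|τ| ^ (-(Module.finrank ℝ V * (1 / 2 - 1 / r).toReal))) *
          eLpNorm f r' := by
  obtain ⟨C, hC⟩ := exists_forall_eLpNorm_fourier_le V ℂ (r' := r') hr
  generalize hd : Module.finrank ℝ V = d
  have hexp : -(d : ℝ) / 2 + d * (1 / r).toReal = -(d * (1 / 2 - 1 / r).toReal) := by
    rw [ENNReal.toReal_sub_of_le (by simpa using hr) (by simp)]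
    simp
    ring
  generalize d * (1 / 2 - 1 / r).toReal = a at hexp ⊢
  obtain ⟨K, hK⟩ : ∃ K : ℝ≥0, (K : ℝ≥0∞) = ENNReal.ofReal ((4 * π) ^ (-a)) := ⟨_, rfl⟩
  refine ⟨K * C, fun τ hτ f ↦ ?_⟩
  have hchirp : eLpNorm (fun y ↦ chirp τ y * f y) r' = eLpNorm f r' :=
    eLpNorm_congr_enorm_ae (.of_forall fun y ↦ by rw [enorm_mul, enorm_chirp, one_mul])
  have hconst : (K * C : ℝ≥0) * ENNReal.ofReal (|τ| ^ (-a)) * eLpNorm f r' =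
      K * ENNReal.ofReal (|τ| ^ (-a)) * (C * eLpNorm f r') := by
    rw [ENNReal.coe_mul]
    ring
  rw [eLpNorm_schrod_eq d hτ, hd, hexp, Real.mul_rpow (by positivity) (by positivity),
    ENNReal.ofReal_mul (by positivity), ← hK, hconst, ← hchirp]
  exact mul_le_mul_right (hC _) _

end Dispersive

section Duhamel

open scoped NNReal

lemma measurable_uncurry_schrod {S V : Type*} [MeasurableSpace S] [NormedAddCommGroup V]
    [MeasureSpace V] [SFinite (volume : Measure V)] [BorelSpace V] [SecondCountableTopology V]
    (d : ℕ) {τ : S → ℝ} (hτ : Measurable τ) {F : S → V → ℂ}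
    (hF : Measurable (Function.uncurry F)) :
    Measurable (Function.uncurry fun s ↦ schrod d (τ s) (F s)) := by
  have : Measurable fun z : (S × V) × V ↦ F z.1.1 z.2 :=
    hF.comp ((measurable_fst.comp measurable_fst).prodMk measurable_snd)
  have hint : Measurable fun z : S × V ↦ ∫ y, Complex.exp (Complex.I *
      ((‖z.2 - y‖ ^ 2 : ℝ) : ℂ) / (4 * (τ z.1 : ℂ))) * F z.1 y :=
    (Measurable.stronglyMeasurable (f := fun z : (S × V) × V ↦ Complex.exp (Complex.I *
      ((‖z.1.2 - z.2‖ ^ 2 : ℝ) : ℂ) / (4 * (τ z.1.1 : ℂ))) * F z.1.1 z.2)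
      (by fun_prop)).integral_prod_right'.measurable
  classical
  have hconst : Measurable fun z : S × V ↦
      (4 * (π : ℂ) * Complex.I * (τ z.1 : ℂ)) ^ (-(d : ℂ) / 2) := by fun_prop
  have hzero : MeasurableSet {z : S × V | τ z.1 = 0} :=
    (hτ.comp measurable_fst) (measurableSet_singleton 0)
  have hite : (Function.uncurry fun s ↦ schrod d (τ s) (F s)) = fun z ↦
      if τ z.1 = 0 then Function.uncurry F z else (4 * (π : ℂ) * Complex.I * (τ z.1 : ℂ)) ^
        (-(d : ℂ) / 2) * ∫ y, Complex.exp (Complex.I * ((‖z.2 - y‖ ^ 2 : ℝ) : ℂ) /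
          (4 * (τ z.1 : ℂ))) * F z.1 y := by
    funext z
    simp only [Function.uncurry, schrod]
    split_ifs <;> rfl
  rw [hite]
  exact .ite hzero hF (hconst.mul hint)

lemma measurable_uncurry_nonlin {S X : Type*} [MeasurableSpace S] [MeasurableSpace X] (p : ℝ)
    {u : S → X → ℂ} (hu : Measurable (Function.uncurry u)) :
    Measurable (Function.uncurry fun s ↦ nonlin p (u s)) := by
  change Measurable fun z : S × X ↦
    ((‖Function.uncurry u z‖ ^ p : ℝ) : ℂ) * Function.uncurry u z
  fun_prop

lemma eLpNorm_nonlin_le {X : Type*} [MeasurableSpace X] {μ : Measure X} {v : X → ℂ}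
    (hv : AEStronglyMeasurable v μ) {p : ℝ} (hp : 0 < p) {q r r' : ℝ≥0∞}
    (h : ENNReal.ofReal p / q + r⁻¹ = r'⁻¹) :
    eLpNorm (nonlin p v) r' μ ≤ eLpNorm v q μ ^ p * eLpNorm v r μ := by
  have hp' : ENNReal.ofReal p ≠ 0 := by simpa using hp
  have : ENNReal.HolderTriple (q / ENNReal.ofReal p) r r' :=
    ⟨by rw [← h, ENNReal.inv_div (.inl ENNReal.ofReal_ne_top) (.inl hp')]⟩
  have hpow : eLpNorm (fun x ↦ ((‖v x‖ ^ p : ℝ) : ℂ)) (q / ENNReal.ofReal p) μ =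
      eLpNorm v q μ ^ p := by
    rw [← ENNReal.div_mul_cancel (b := q) hp' ENNReal.ofReal_ne_top, ← eLpNorm_norm_rpow v hp,
      ENNReal.div_mul_cancel hp' ENNReal.ofReal_ne_top]
    exact eLpNorm_congr_norm_ae (.of_forall fun x ↦ by simp)
  have hsmul : nonlin p v = (fun x ↦ ((‖v x‖ ^ p : ℝ) : ℂ)) • v :=
    funext fun x ↦ (smul_eq_mul _ _).symm
  rw [← hpow, hsmul]
  refine eLpNorm_smul_le_mul_eLpNorm hv ?_
  exact (Complex.continuous_ofReal.comp (continuous_id.rpow_const fun _ ↦ .inr hp.le))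
    |>.comp_aestronglyMeasurable hv.norm

variable (V : Type*) [NormedAddCommGroup V] [InnerProductSpace ℝ V] [FiniteDimensional ℝ V]
  [MeasurableSpace V] [BorelSpace V]

theorem exists_forall_eLpNorm_setIntegral_schrod_le {r r' : ℝ≥0∞} [r.HolderConjugate r']
    (hr : 2 ≤ r) :
    ∃ C : ℝ≥0, ∀ (t : ℝ) (I : Set ℝ) (F : ℝ → V → ℂ), Measurable (Function.uncurry F) →
      eLpNorm (fun x ↦ ∫ s in I, schrod (Module.finrank ℝ V) (t - s) (F s) x) r ≤
        C * ∫⁻ s in I, ENNReal.ofReal (|t - s| ^ (-(Module.finrank ℝ V * (1 / 2 - 1 / r).toReal))) *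
          eLpNorm (F s) r' := by
  obtain ⟨C, hC⟩ := exists_forall_eLpNorm_schrod_le V (r' := r') hr
  refine ⟨C, fun t I F hF ↦ ?_⟩
  have hschrod : StronglyMeasurable (Function.uncurry fun s ↦
      schrod (Module.finrank ℝ V) (t - s) (F s)) :=
    (measurable_uncurry_schrod _ (by fun_prop) hF).stronglyMeasurable
  have hne : ∀ᵐ s ∂volume.restrict I, t - s ≠ 0 := by
    filter_upwards [ae_restrict_of_ae (Measure.ae_ne volume t)] with s hs
    exact sub_ne_zero.2 hs.symm
  refine (eLpNorm_integral_le_lintegral_eLpNorm hschrod (one_le_two.trans hr)).trans ?_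
  rw [← lintegral_const_mul' _ _ ENNReal.coe_ne_top]
  refine lintegral_mono_ae (hne.mono fun s hs ↦ ?_)
  rw [← mul_assoc]
  exact hC _ hs _

end Duhamel

section LateTime

open scoped NNReal

lemma setLIntegral_ofReal_abs_sub_rpow_mul_rpow_le {a p : ℝ} (ha0 : 0 ≤ a) (ha1 : a < 1)
    (hp : 0 < p) {P : ℝ≥0∞} (hP : p / P.toReal = 1 - a) (t : ℝ) (I : Set ℝ) {g : ℝ → ℝ≥0∞}
    (hg : Measurable g) :
    ∫⁻ s in I, ENNReal.ofReal (|t - s| ^ (-a)) * g s ^ p ≤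
      ENNReal.ofReal (2 / (1 - a) + 1) * (ENNReal.ofReal p / P) *
        lorentzNorm (volume.restrict I) P (ENNReal.ofReal p) g ^ p := by
  have hP' : P.toReal ≠ 0 := by
    intro h
    rw [h, div_zero] at hP
    exact (sub_pos.2 ha1).ne hP
  obtain ⟨hP0, hPtop⟩ := ENNReal.toReal_ne_zero.1 hP'
  refine lintegral_mul_rpow_le_lorentzNorm_rpow (by fun_prop) hg hP0 hPtop ENNReal.ofReal_ne_top hp
    fun E hE ↦ ?_
  rw [Measure.restrict_restrict hE, Measure.restrict_apply hE, hP]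
  exact setLIntegral_ofReal_abs_sub_rpow_le ha0 ha1 t _

lemma le_ofReal_mul_iSup_ofReal_rpow_mul {t : ℝ} (ht : 0 < t) {I : Set ℝ} (hI : I ⊆ Ici (t / 2))
    {a : ℝ} (ha : 0 ≤ a) (φ : ℝ → ℝ≥0∞) {s : ℝ} (hs : s ∈ I) :
    φ s ≤ ENNReal.ofReal (2 ^ a * t ^ (-a)) * ⨆ s ∈ I, ENNReal.ofReal (s ^ a) * φ s := by
  have hts : t / 2 ≤ s := hI hs
  have hs0 : 0 < s := by linarith
  calc φ s = ENNReal.ofReal (s ^ (-a)) * (ENNReal.ofReal (s ^ a) * φ s) := by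
        rw [← mul_assoc, ← ENNReal.ofReal_mul (by positivity), ← Real.rpow_add hs0, neg_add_cancel,
          Real.rpow_zero, ENNReal.ofReal_one, one_mul]
    _ ≤ ENNReal.ofReal ((t / 2) ^ (-a)) * ⨆ s ∈ I, ENNReal.ofReal (s ^ a) * φ s :=
        mul_le_mul'
          (ENNReal.ofReal_le_ofReal
            (Real.rpow_le_rpow_of_nonpos (by positivity) hts (neg_nonpos.2 ha)))
          (le_iSup₂ (f := fun s _ ↦ ENNReal.ofReal (s ^ a) * φ s) s hs)
    _ = _ := by
        rw [Real.div_rpow ht.le zero_le_two, Real.rpow_neg zero_le_two, div_inv_eq_mul,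
          mul_comm (t ^ (-a))]

lemma setLIntegral_ofReal_abs_sub_rpow_mul_eLpNorm_nonlin_le {X : Type*} [MeasurableSpace X]
    {ν : Measure X} [SFinite ν] {a p t : ℝ} (ha0 : 0 ≤ a) (ha1 : a < 1) (hp : 0 < p) (ht : 0 < t)
    {I : Set ℝ} (hI : MeasurableSet I) (hIt : I ⊆ Ici (t / 2)) {q r r' P : ℝ≥0∞}
    (hq : ENNReal.ofReal p / q + r⁻¹ = r'⁻¹) (hP : p / P.toReal = 1 - a) {u : ℝ → X → ℂ}
    (hu : Measurable (Function.uncurry u)) :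
    ∫⁻ s in I, ENNReal.ofReal (|t - s| ^ (-a)) * eLpNorm (nonlin p (u s)) r' ν ≤
      ENNReal.ofReal (2 ^ a * t ^ (-a)) *
        (⨆ s ∈ I, ENNReal.ofReal (s ^ a) * eLpNorm (u s) r ν) *
        (ENNReal.ofReal (2 / (1 - a) + 1) * (ENNReal.ofReal p / P) *
          lorentzMixedNorm ν I P (ENNReal.ofReal p) q u ^ p) := by
  set M := ⨆ s ∈ I, ENNReal.ofReal (s ^ a) * eLpNorm (u s) r ν
  have hg : Measurable fun s ↦ eLpNorm (u s) q ν := measurable_eLpNorm hu.stronglyMeasurable q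
  have hnonlin : ∀ s ∈ I, eLpNorm (nonlin p (u s)) r' ν ≤
      eLpNorm (u s) q ν ^ p * (ENNReal.ofReal (2 ^ a * t ^ (-a)) * M) := fun s hs ↦
    (eLpNorm_nonlin_le (hu.comp measurable_prodMk_left).aestronglyMeasurable hp hq).trans
      (mul_le_mul_right (le_ofReal_mul_iSup_ofReal_rpow_mul ht hIt ha0 _ hs) _)
  calc ∫⁻ s in I, ENNReal.ofReal (|t - s| ^ (-a)) * eLpNorm (nonlin p (u s)) r' ν
      ≤ ∫⁻ s in I, ENNReal.ofReal (2 ^ a * t ^ (-a)) * M *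
          (ENNReal.ofReal (|t - s| ^ (-a)) * eLpNorm (u s) q ν ^ p) := by
        refine setLIntegral_mono' hI fun s hs ↦ (mul_le_mul_right (hnonlin s hs) _).trans_eq ?_
        ring
    _ = ENNReal.ofReal (2 ^ a * t ^ (-a)) * M *
          ∫⁻ s in I, ENNReal.ofReal (|t - s| ^ (-a)) * eLpNorm (u s) q ν ^ p :=
        lintegral_const_mul _ (by fun_prop)
    _ ≤ _ := mul_le_mul_right
        (setLIntegral_ofReal_abs_sub_rpow_mul_rpow_le ha0 ha1 hp hP t I hg) _

lemma div_toReal_eq_one_sub {p : ℝ} (hp : 0 < p) {P b : ℝ≥0∞} (h : ENNReal.ofReal p / P + b = 1) :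
    p / P.toReal = 1 - b.toReal := by
  have hsum : ENNReal.ofReal p / P + b ≠ ∞ := h ▸ ENNReal.one_ne_top
  have hreal := congrArg ENNReal.toReal h
  rw [ENNReal.toReal_add (ENNReal.add_ne_top.1 hsum).1 (ENNReal.add_ne_top.1 hsum).2,
    ENNReal.toReal_div, ENNReal.toReal_ofReal hp.le, ENNReal.toReal_one] at hreal
  exact eq_sub_of_add_eq hreal

lemma four_mul_quarter_sub_add_two_div {r : ℝ≥0∞} (hr : 2 ≤ r) :
    4 * (1 / 4 - 1 / (2 * r)) + 2 / r = 1 := by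
  have h4 : (4 : ℝ≥0∞) = 2 * 2 := by norm_num
  have hcancel : (2 : ℝ≥0∞) * 2⁻¹ = 1 := ENNReal.mul_inv_cancel two_ne_zero ENNReal.ofNat_ne_top
  have hmul : 4 * (1 / (2 * r)) = 2 / r := by
    rw [one_div, ENNReal.mul_inv (by simp) (by simp), h4, mul_assoc, ← mul_assoc 2 2⁻¹, hcancel,
      one_mul, div_eq_mul_inv]
  rw [ENNReal.mul_sub fun _ _ ↦ ENNReal.ofNat_ne_top, hmul,
    ENNReal.mul_div_cancel four_ne_zero ENNReal.ofNat_ne_top,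
    tsub_add_cancel_of_le (ENNReal.div_le_of_le_mul (by rwa [one_mul]))]

lemma four_mul_eighth_add_add_half_sub {r : ℝ≥0∞} (hr : 2 ≤ r) :
    4 * (1 / 8 + 1 / (4 * r)) + (1 / 2 - 1 / r) = 1 := by
  have hcancel : (4 : ℝ≥0∞) * 4⁻¹ = 1 := ENNReal.mul_inv_cancel four_ne_zero ENNReal.ofNat_ne_top
  have hmul (x : ℝ≥0∞) : 4 * (1 / (4 * x)) = 1 / x := by
    rw [one_div, ENNReal.mul_inv (by simp) (by simp), ← mul_assoc, hcancel, one_mul, one_div]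
  rw [mul_add, hmul, show (8 : ℝ≥0∞) = 4 * 2 by norm_num, hmul, add_assoc,
    add_tsub_cancel_of_le (by simpa using hr), ENNReal.add_halves]

theorem late_time_duhamel_1d_general {V : Type*} [NormedAddCommGroup V] [InnerProductSpace ℝ V]
    [FiniteDimensional ℝ V] [MeasurableSpace V] [BorelSpace V] {p : ℝ} (hp : 0 < p)
    {r q P : ℝ≥0∞} (hr : 2 ≤ r) (hq : ENNReal.ofReal p / q + 2 / r = 1) (hP : P ≠ ∞)
    (hPr : ENNReal.ofReal p / P + Module.finrank ℝ V * (1 / 2 - 1 / r) = 1) :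
    ∃ C : ℝ, 0 < C ∧
      ∀ t : ℝ, 0 < t →
        ∀ I : Set ℝ, MeasurableSet I → I ⊆ Ici (t / 2) →
          ∀ u : ℝ → V → ℂ, Measurable (Function.uncurry u) →
            eLpNorm (fun x ↦ ∫ s in I, schrod (Module.finrank ℝ V) (t - s) (nonlin p (u s)) x) r
                volume ≤
              ENNReal.ofReal (C * t ^ (-(Module.finrank ℝ V * (1 / 2 - 1 / r).toReal))) *
                (⨆ s ∈ I, ENNReal.ofReal (s ^ (Module.finrank ℝ V * (1 / 2 - 1 / r).toReal)) *
                  eLpNorm (u s) r volume) *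
                lorentzMixedNorm volume I P (ENNReal.ofReal p) q u ^ p := by
  have : r.HolderConjugate r.conjExponent := .conjExponent (one_le_two.trans hr)
  obtain ⟨C₀, hC₀⟩ := exists_forall_eLpNorm_setIntegral_schrod_le V (r' := r.conjExponent) hr
  have hPa := div_toReal_eq_one_sub hp hPr
  rw [ENNReal.toReal_mul, ENNReal.toReal_natCast] at hPa
  have hP0 : P ≠ 0 := by
    rintro rfl
    simp [ENNReal.div_zero, hp] at hPr
  have ha1 : Module.finrank ℝ V * (1 / 2 - 1 / r).toReal < 1 := by
    have := div_pos hp (ENNReal.toReal_pos hP0 hP)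
    linarith
  have ha0 : 0 ≤ Module.finrank ℝ V * (1 / 2 - 1 / r).toReal := by positivity
  generalize Module.finrank ℝ V * (1 / 2 - 1 / r).toReal = a at *
  have hqr : ENNReal.ofReal p / q + r⁻¹ = r.conjExponent⁻¹ := by
    have hr' : r⁻¹ ≠ ∞ := ENNReal.inv_ne_top.2 (two_pos.trans_le hr).ne'
    rw [← ENNReal.add_left_inj hr', add_assoc, ← two_mul, ← div_eq_mul_inv, hq, add_comm,
      ENNReal.HolderConjugate.inv_add_inv_eq_one]
  obtain ⟨K, hK⟩ : ∃ K : ℝ≥0, (K : ℝ≥0∞) = C₀ * ENNReal.ofReal (2 ^ a) *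
      (ENNReal.ofReal (2 / (1 - a) + 1) * (ENNReal.ofReal p / P)) :=
    ⟨_, ENNReal.coe_toNNReal (by finiteness)⟩
  refine ⟨K + 1, by positivity, fun t ht I hI hIt u hu ↦ ?_⟩
  refine (hC₀ t I _ (measurable_uncurry_nonlin p hu)).trans ?_
  refine (mul_le_mul_right (setLIntegral_ofReal_abs_sub_rpow_mul_eLpNorm_nonlin_le ha0 ha1 hp ht hI
    hIt hqr hPa hu) _).trans ?_
  set M := ⨆ s ∈ I, ENNReal.ofReal (s ^ a) * eLpNorm (u s) r volume
  set L := lorentzMixedNorm volume I P (ENNReal.ofReal p) q u ^ p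
  calc C₀ * (ENNReal.ofReal (2 ^ a * t ^ (-a)) * M *
        (ENNReal.ofReal (2 / (1 - a) + 1) * (ENNReal.ofReal p / P) * L))
      = K * ENNReal.ofReal (t ^ (-a)) * M * L := by
        rw [hK, ENNReal.ofReal_mul (by positivity)]
        ring
    _ ≤ ENNReal.ofReal ((K + 1) * t ^ (-a)) * M * L := by
        rw [ENNReal.ofReal_mul (by positivity), ← ENNReal.ofReal_coe_nnreal]
        gcongr
        exact le_add_of_nonneg_right zero_le_one

end LateTime

/-- **One-dimensional late-time Duhamel estimate.**  Fix `2 < r ≤ ∞`.  For any `t > 0`, any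
measurable interval `I ⊆ [t/2, t]`, and any measurable `u` on `I × ℝ`,
`‖∫_I e^{i(t-s)Δ}(|u|⁴u)(s) ds‖_{L^r_x} ≤ C t^{-(1/2-1/r)}
  (sup_{s∈I} s^{1/2-1/r} ‖u(s)‖_{L^r_x}) ‖u‖⁴_{L^{8r/(r+2),4}_s L^{4r/(r-2)}_x(I×ℝ)}`,
with `C = C(r)`.  The exponents are encoded via their reciprocals `(r+2)/(8r) = 1/8 + 1/(4r)`
and `(r-2)/(4r) = 1/4 - 1/(2r)`, which for `r = ∞` give `8` and `4` respectively. -/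
theorem late_time_duhamel_1d (r : ℝ≥0∞) (hr : 2 < r) :
    ∃ C : ℝ, 0 < C ∧
      ∀ t : ℝ, 0 < t →
        ∀ I : Set ℝ, MeasurableSet I → I.OrdConnected → I ⊆ Set.Icc (t / 2) t →
          ∀ u : ℝ → ℝ → ℂ, Measurable (Function.uncurry u) →
            eLpNorm (fun x => ∫ s in I, schrod 1 (t - s) (nonlin 4 (u s)) x) r volume ≤
              ENNReal.ofReal (C * t ^ (-(1 / 2 - 1 / r).toReal)) *
                (⨆ s ∈ I, ENNReal.ofReal (s ^ (1 / 2 - 1 / r).toReal) *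
                  eLpNorm (u s) r volume) *
                lorentzMixedNorm volume I (1 / 8 + 1 / (4 * r))⁻¹ 4
                    (1 / 4 - 1 / (2 * r))⁻¹ u ^ 4 := by
  have hq : ENNReal.ofReal 4 / (1 / 4 - 1 / (2 * r))⁻¹ + 2 / r = 1 := by
    simpa [div_eq_mul_inv] using four_mul_quarter_sub_add_two_div hr.le
  have hP : ENNReal.ofReal 4 / (1 / 8 + 1 / (4 * r))⁻¹ +
      Module.finrank ℝ ℝ * (1 / 2 - 1 / r) = 1 := by
    simpa [div_eq_mul_inv] using four_mul_eighth_add_add_half_sub hr.le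
  obtain ⟨C, hC, hbound⟩ := late_time_duhamel_1d_general four_pos hr.le hq (by simp) hP
  refine ⟨C, hC, fun t ht I hI _ hIt u hu ↦ ?_⟩
  simpa using hbound t ht I hI (hIt.trans Icc_subset_Ici_self) u hu
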